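/- Let (X,T) be a saturated dynamical system, B a real Banach space, Φ : X → B* continuous for the weak-star topology on B*, E ⊆ B, and α ∈ B*. If M_Φ(α;E) is nonempty, then the Bowen topological entropy of X_Φ(α;E) satisfies the variational principle h_top(X_Φ(α;E)) = sup{ h_μ : μ ∈ M_Φ(α;E) }. -/

import Mathlib

open MeasureTheory Filter Topology Set
open scoped ENNReal NNReal

/-!  General definitions: Bowen topological entropy (via covers by Bowen balls),
measure-theoretic (Kolmogorov–Sinai) entropy, generic points, saturated systems,
and the specification property. -/

variable {X : Type*}

/-- The Bowen ball of center `x`, order `n`, radius `ε` (for the metric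
`d_n(x,y) = max_{0 ≤ j < n} d(T^j x, T^j y)`). -/
def bowenBall [PseudoMetricSpace X] (T : X → X) (x : X) (n : ℕ) (ε : ℝ) : Set X :=
  {y | ∀ j < n, dist (T^[j] x) (T^[j] y) < ε}

/-- `H_n^s(Z,ε)`: infimum of `Σ_i exp(-s n_i)` over countable covers of `Z` by Bowen balls
`B_{n_i}(x_i,ε)` with all `n_i ≥ n`. -/
noncomputable def bowenH [PseudoMetricSpace X] (T : X → X) (Z : Set X) (s ε : ℝ) (n : ℕ) :
    ℝ≥0∞ :=
  ⨅ (C : Set (X × ℕ)) (_ : C.Countable) (_ : ∀ p ∈ C, n ≤ p.2)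
    (_ : Z ⊆ ⋃ p ∈ C, bowenBall T p.1 p.2 ε),
    ∑' p : C, ENNReal.ofReal (Real.exp (-s * ((p : X × ℕ).2 : ℝ)))

/-- `h_top(Z,ε)`: the critical exponent of `s ↦ H^s(Z,ε) = sup_n H_n^s(Z,ε)`. -/
noncomputable def bowenEntropyRes [PseudoMetricSpace X] (T : X → X) (Z : Set X) (ε : ℝ) :
    ℝ≥0∞ :=
  sInf ((fun s : ℝ≥0 => (s : ℝ≥0∞)) '' {s : ℝ≥0 | (⨆ n, bowenH T Z (s : ℝ) ε n) = 0})

/-- Bowen topological entropy of a subset `Z`: `h_top(Z) = lim_{ε → 0} h_top(Z,ε)`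
(the limit being a supremum by monotonicity in `ε`). -/
noncomputable def bowenEntropy [PseudoMetricSpace X] (T : X → X) (Z : Set X) : ℝ≥0∞ :=
  ⨆ (ε : ℝ) (_ : 0 < ε), bowenEntropyRes T Z ε

/-- Entropy of the partition `P ∨ T⁻¹P ∨ ⋯ ∨ T⁻⁽ⁿ⁻¹⁾P`, where a countable partition is
encoded as a function `P : X → ℕ`: it is the Shannon entropy of the map
`x ↦ (P x, P (T x), …, P (Tⁿ⁻¹ x))`. -/
noncomputable def partInfo [MeasurableSpace X] (T : X → X) (μ : Measure X) (P : X → ℕ)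
    (n : ℕ) : ℝ≥0∞ :=
  ∑' l : List ℕ, ENNReal.ofReal (Real.negMulLog
    ((μ ((fun x => (List.range n).map fun j => P (T^[j] x)) ⁻¹' {l})).toReal))

/-- Measure-theoretic (Kolmogorov–Sinai) entropy `h_μ(T)`: supremum over finite measurable
partitions `P` of `lim_n (1/n) H_μ(P ∨ T⁻¹P ∨ ⋯ ∨ T⁻⁽ⁿ⁻¹⁾P)` (the limit exists by
subadditivity, so it may be written as a `liminf`). -/
noncomputable def ksEntropy [MeasurableSpace X] (T : X → X) (μ : Measure X) : ℝ≥0∞ :=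
  ⨆ (P : X → ℕ) (_ : Measurable P) (_ : (Set.range P).Finite),
    Filter.atTop.liminf fun n : ℕ => partInfo T μ P n / (n : ℝ≥0∞)

/-- `x` is a generic point for `μ` : the empirical measures `(1/n) Σ_{j<n} δ_{T^j x}`
converge to `μ` in the weak-star topology, i.e. Birkhoff averages of every continuous
function converge to its integral. -/
def IsGeneric [TopologicalSpace X] [MeasurableSpace X] (T : X → X) (μ : Measure X)
    (x : X) : Prop :=
  ∀ f : C(X, ℝ), Tendsto (fun n : ℕ => (∑ j ∈ Finset.range n, f (T^[j] x)) / (n : ℝ))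
    atTop (𝓝 (∫ y, f y ∂μ))

/-- `μ ∈ V(x)` : `μ` is a weak-star limit point of the empirical measures of `x`. -/
def IsLimitMeasure [TopologicalSpace X] [MeasurableSpace X] (T : X → X) (x : X)
    (μ : Measure X) : Prop :=
  ∃ φ : ℕ → ℕ, StrictMono φ ∧ ∀ f : C(X, ℝ),
    Tendsto (fun m : ℕ => (∑ j ∈ Finset.range (φ m), f (T^[j] x)) / (φ m : ℝ))
      atTop (𝓝 (∫ y, f y ∂μ))

/-- A system is saturated if `h_top(G_μ) = h_μ` for every invariant Borel probability
measure `μ`. -/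
def Saturated [PseudoMetricSpace X] [MeasurableSpace X] (T : X → X) : Prop :=
  ∀ μ : Measure X, IsProbabilityMeasure μ → MeasurePreserving T μ μ →
    bowenEntropy T {x | IsGeneric T μ x} = ksEntropy T μ

/-- The specification property. -/
def SpecificationProperty [PseudoMetricSpace X] (T : X → X) : Prop :=
  ∀ ε : ℝ, 0 < ε → ∃ m : ℕ, 1 ≤ m ∧
    ∀ k : ℕ, 2 ≤ k → ∀ x : ℕ → X, ∀ a b : ℕ → ℕ,
      (∀ i < k, a i ≤ b i) →
      (∀ i, i + 1 < k → b i + m ≤ a (i + 1)) →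
      ∃ y : X, ∀ i < k, ∀ n ≤ b i - a i,
        dist (T^[a i + n] y) (T^[n] (x i)) < ε

lemma bowenH_le_of_family [PseudoMetricSpace X] (T : X → X) {Z : Set X} (s ε : ℝ) (n : ℕ)
    {ι : Type*} [Countable ι] (f : ι → X × ℕ) (hn : ∀ i, n ≤ (f i).2)
    (hZ : Z ⊆ ⋃ i, bowenBall T (f i).1 (f i).2 ε) :
    bowenH T Z s ε n ≤ ∑' i, ENNReal.ofReal (Real.exp (-s * ((f i).2 : ℝ))) := by
  refine (iInf₂_le_of_le (range f) (countable_range f) <| iInf₂_le_of_le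
    (by rintro _ ⟨i, rfl⟩; exact hn i) (by simpa using hZ) le_rfl).trans ?_
  have h := ENNReal.tsum_comp_le_tsum_of_injective (rangeSplitting_injective f)
    fun i => ENNReal.ofReal (Real.exp (-s * ((f i).2 : ℝ)))
  simpa only [apply_rangeSplitting] using h

lemma bowenH_mono [PseudoMetricSpace X] (T : X → X) {Y Z : Set X} (h : Y ⊆ Z) (s ε : ℝ) (n : ℕ) :
    bowenH T Y s ε n ≤ bowenH T Z s ε n :=
  iInf_mono fun _ => iInf_mono fun _ => iInf_mono fun _ => iInf_mono' fun h' =>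
    ⟨h.trans h', le_rfl⟩

lemma bowenEntropy_mono [PseudoMetricSpace X] (T : X → X) {Y Z : Set X} (h : Y ⊆ Z) :
    bowenEntropy T Y ≤ bowenEntropy T Z :=
  iSup₂_mono fun ε _ => sInf_le_sInf <| image_mono fun s hs =>
    le_antisymm ((iSup_mono fun n => bowenH_mono T h s ε n).trans hs.le) zero_le

lemma bowenH_iUnion_eq_zero [PseudoMetricSpace X] (T : X → X) {ι : Type*} [Countable ι]
    (Z : ι → Set X) (s ε : ℝ) (n : ℕ) (h : ∀ i, bowenH T (Z i) s ε n = 0) :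
    bowenH T (⋃ i, Z i) s ε n = 0 := by
  refine le_antisymm (le_of_forall_gt fun δ hδ => ?_) zero_le
  obtain ⟨η, hη, hsum⟩ := ENNReal.exists_pos_sum_of_countable' hδ.ne' ι
  have H : ∀ i, ∃ C : Set (X × ℕ), C.Countable ∧ (∀ p ∈ C, n ≤ p.2) ∧
      (Z i ⊆ ⋃ p ∈ C, bowenBall T p.1 p.2 ε) ∧
      ∑' p : C, ENNReal.ofReal (Real.exp (-s * ((p : X × ℕ).2 : ℝ))) < η i := by
    intro i
    have hi := hη i
    rw [← h i] at hi
    simpa only [bowenH, iInf_lt_iff, exists_prop] using hi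
  choose C hC hCn hCZ hCs using H
  have (i : ι) : Countable (C i) := (hC i).to_subtype
  refine (bowenH_le_of_family T s ε n (fun q : Σ i, C i => (q.2 : X × ℕ))
    (fun q => hCn _ _ q.2.2) ?_).trans_lt (lt_of_le_of_lt ?_ hsum)
  · refine iUnion_subset fun i x hx => ?_
    obtain ⟨p, hp, hxp⟩ := mem_iUnion₂.1 (hCZ i hx)
    exact mem_iUnion.2 ⟨⟨i, p, hp⟩, hxp⟩
  · rw [ENNReal.tsum_sigma']
    exact ENNReal.tsum_le_tsum fun i => (hCs i).le

/-- Points whose orbit, after time `r`, is infinitely often `ε / 2`-shadowed by a string of words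
of length `m` of average weight at most `m * t`. -/
def lowWeightSet [PseudoMetricSpace X] (T : X → X) {k : ℕ} (c : Fin k → X) (ε t : ℝ) (m r : ℕ)
    (g : (Fin m → Fin k) → ℝ) : Set X :=
  {x | ∃ᶠ L : ℕ in atTop, ∃ b : Fin L → Fin m → Fin k,
    (∀ (l : Fin L) (j : Fin m), dist (T^[r + m * (l : ℕ) + (j : ℕ)] x) (c (b l j)) < ε / 2) ∧
      ∑ l, g (b l) ≤ (L : ℝ) * (m * t)}

lemma bowenH_lowWeightSet [PseudoMetricSpace X] (T : X → X) {k : ℕ} (c : Fin k → X) {ε t s : ℝ}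
    (hc : ∀ y, ∃ i, dist y (c i) < ε / 2) {m : ℕ} (hm : 0 < m) (r : ℕ)
    (g : (Fin m → Fin k) → ℝ) (hs : 0 ≤ s)
    (hg : ∑ b, Real.exp (-g b) < Real.exp ((s - t) * m)) (n : ℕ) :
    bowenH T (lowWeightSet T c ε t m r g) s ε n = 0 := by
  set ρ : ℝ := (∑ b, Real.exp (-g b)) * Real.exp (-((s - t) * m)) with hρ
  have hρ0 : 0 ≤ ρ := by positivity
  have hρ1 : ρ < 1 := by
    rw [hρ, Real.exp_neg, ← div_eq_mul_inv, div_lt_one (Real.exp_pos _)]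
    exact hg
  set F : ℕ → ℝ≥0∞ := fun L => ENNReal.ofReal ((k : ℝ) ^ r * ρ ^ L) with hF
  have hFsum : ∑' L, F L ≠ ∞ :=
    ((summable_geometric_of_lt_one hρ0 hρ1).mul_left ((k : ℝ) ^ r)).tsum_ofReal_ne_top
  have htail := ENNReal.tendsto_sum_nat_add F hFsum
  refine le_antisymm (ge_of_tendsto htail ?_) zero_le
  filter_upwards [eventually_ge_atTop n] with L₀ hL₀
  let D : (Σ i : ℕ, (Fin r → Fin k) × (Fin (i + L₀) → Fin m → Fin k)) → Set X := fun q =>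
    {x | (∀ j : Fin r, dist (T^[(j : ℕ)] x) (c (q.2.1 j)) < ε / 2) ∧
      ∀ (l : Fin (q.1 + L₀)) (j : Fin m), dist (T^[r + m * (l : ℕ) + (j : ℕ)] x) (c (q.2.2 l j)) < ε / 2}
  let I := {q : (Σ i : ℕ, (Fin r → Fin k) × (Fin (i + L₀) → Fin m → Fin k)) //
    (D q).Nonempty ∧ ∑ l, g (q.2.2 l) ≤ ((q.1 + L₀ : ℕ) : ℝ) * (m * t)}
  have hball : ∀ q, ∀ x ∈ D q, D q ⊆ bowenBall T x (r + m * (q.1 + L₀)) ε := by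
    intro q x hx y hy j hj
    rcases lt_or_ge j r with h | h
    · have h1 := hx.1 ⟨j, h⟩
      have h2 := hy.1 ⟨j, h⟩
      have h3 := dist_triangle_right (T^[j] x) (T^[j] y) (c (q.2.1 ⟨j, h⟩))
      simp only at h1 h2
      linarith
    · have hl : (j - r) / m < q.1 + L₀ := by
        rw [Nat.div_lt_iff_lt_mul hm, mul_comm]; omega
      have h1 := hx.2 ⟨(j - r) / m, hl⟩ ⟨(j - r) % m, Nat.mod_lt _ hm⟩
      have h2 := hy.2 ⟨(j - r) / m, hl⟩ ⟨(j - r) % m, Nat.mod_lt _ hm⟩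
      have h4 : r + m * ((j - r) / m) + (j - r) % m = j := by
        rw [add_assoc, Nat.div_add_mod]; omega
      simp only [h4] at h1 h2
      have h3 := dist_triangle_right (T^[j] x) (T^[j] y)
        (c (q.2.2 ⟨(j - r) / m, hl⟩ ⟨(j - r) % m, Nat.mod_lt _ hm⟩))
      linarith
  refine (bowenH_le_of_family T s ε n
    (fun q : I => (q.2.1.some, r + m * (q.1.1 + L₀))) ?_ ?_).trans ?_
  · intro q
    have : 1 * (q.1.1 + L₀) ≤ m * (q.1.1 + L₀) := Nat.mul_le_mul_right _ hm
    change n ≤ r + m * (q.1.1 + L₀)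
    omega
  · intro x hx
    obtain ⟨L, hL, b, hb, hbg⟩ := (frequently_atTop.1 hx) L₀
    obtain ⟨i, rfl⟩ := Nat.exists_eq_add_of_le' hL
    choose u hu using fun j : Fin r => hc (T^[(j : ℕ)] x)
    have hxD : x ∈ D ⟨i, u, b⟩ := ⟨hu, hb⟩
    exact mem_iUnion.2 ⟨⟨⟨i, u, b⟩, ⟨x, hxD⟩, hbg⟩, hball _ _ (Nonempty.some_mem _) hxD⟩
  · let W : (Σ i : ℕ, (Fin r → Fin k) × (Fin (i + L₀) → Fin m → Fin k)) → ℝ := fun q =>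
      Real.exp (-((s - t) * m)) ^ (q.1 + L₀) * ∏ l, Real.exp (-g (q.2.2 l))
    have hW : ∀ q : I, ENNReal.ofReal (Real.exp (-s * ((r + m * (q.1.1 + L₀) : ℕ) : ℝ))) ≤
        ENNReal.ofReal (W q.1) := by
      intro q
      refine ENNReal.ofReal_le_ofReal ?_
      simp only [W]
      rw [← Real.exp_nat_mul, ← Real.exp_sum, ← Real.exp_add, Real.exp_le_exp,
        Finset.sum_neg_distrib]
      have h := q.2.2
      have hr : 0 ≤ s * r := by positivity
      push_cast at h ⊢
      nlinarith
    refine (ENNReal.tsum_le_tsum hW).trans ((ENNReal.tsum_comp_le_tsum_of_injective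
      Subtype.val_injective fun q => ENNReal.ofReal (W q)).trans ?_)
    rw [ENNReal.tsum_sigma']
    refine ENNReal.tsum_le_tsum fun i => ?_
    rw [tsum_fintype, ← ENNReal.ofReal_sum_of_nonneg (fun _ _ => by positivity)]
    refine ENNReal.ofReal_le_ofReal (le_of_eq ?_)
    simp only [W]
    rw [Fintype.sum_prod_type]
    simp only [← Finset.mul_sum]
    change _ * ∑ _ : Fin r → Fin k, ∑ b : Fin (i + L₀) → Fin m → Fin k,
      ∏ l, Real.exp (-g (b l)) = _
    rw [← Fintype.sum_pow (fun b => Real.exp (-g b)), Finset.sum_const, hρ, mul_pow]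
    simp only [Finset.card_univ, Fintype.card_fun, Fintype.card_fin, nsmul_eq_mul, Nat.cast_pow]
    ring

lemma null_frontier_biInter [TopologicalSpace X] [MeasurableSpace X] {μ : Measure X} {ι : Type*}
    (s : Finset ι) {A : ι → Set X} (hA : ∀ i ∈ s, μ (frontier (A i)) = 0) :
    μ (frontier (⋂ i ∈ s, A i)) = 0 := by
  classical
  induction s using Finset.induction_on with
  | empty => simp
  | insert i s _ ih =>
    rw [Finset.set_biInter_insert]
    exact null_frontier_inter (hA i (Finset.mem_insert_self _ _))
      (ih fun j hj => hA j (Finset.mem_insert_of_mem hj))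

lemma Finset.sum_range_mul_eq_sum_phases {M : Type*} [AddCommMonoid M] (f : ℕ → M) (m L : ℕ) :
    ∑ i ∈ Finset.range (m * L), f i =
      ∑ r ∈ Finset.range m, ∑ l ∈ Finset.range L, f (r + m * l) := by
  induction L with
  | zero => simp
  | succ L ih =>
    rw [mul_add_one, Finset.sum_range_add, ih]
    simp only [Finset.sum_range_succ, Finset.sum_add_distrib, add_comm]

lemma exists_denseSeq_weight {ι : Type*} [Fintype ι] {p : ι → ℝ} (hp : ∀ b, 0 ≤ p b)
    (hp1 : ∑ b, p b = 1) {A D : ℝ} (hA : ∑ b, Real.negMulLog (p b) < A) (hD : 0 < D) :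
    ∃ j, ∑ b, p b * TopologicalSpace.denseSeq (ι → ℝ) j b < A ∧
      ∑ b, Real.exp (-TopologicalSpace.denseSeq (ι → ℝ) j b) < Real.exp D := by
  have hopen : IsOpen {g : ι → ℝ | ∑ b, p b * g b < A ∧ ∑ b, Real.exp (-g b) < Real.exp D} :=
    IsOpen.and (isOpen_lt (by fun_prop) (by fun_prop)) (isOpen_lt (by fun_prop) (by fun_prop))
  refine (TopologicalSpace.denseRange_denseSeq (ι → ℝ)).exists_mem_open hopen ?_
  obtain ⟨η, hη, hηD⟩ : ∃ η : ℝ, 0 < η ∧ 1 + Fintype.card ι * η < Real.exp D := by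
    have h1 : 1 < Real.exp D := Real.one_lt_exp_iff.2 hD
    have hc : (0 : ℝ) < Fintype.card ι + 1 := by positivity
    refine ⟨(Real.exp D - 1) / (Fintype.card ι + 1), div_pos (by linarith) hc, ?_⟩
    have h2 : (Fintype.card ι + 1 : ℝ) * ((Real.exp D - 1) / (Fintype.card ι + 1)) =
        Real.exp D - 1 := mul_div_cancel₀ _ hc.ne'
    have h3 : 0 < (Real.exp D - 1) / (Fintype.card ι + 1) := div_pos (by linarith) hc
    linarith
  refine ⟨fun b => -Real.log (p b + η), lt_of_le_of_lt (Finset.sum_le_sum fun b _ => ?_) hA, ?_⟩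
  · rcases (hp b).eq_or_lt with h | h
    · simp [← h]
    · have := mul_le_mul_of_nonneg_left (Real.log_le_log h (by linarith : p b ≤ p b + η)) (hp b)
      simp only [Real.negMulLog]
      linarith
  · have : ∀ b, Real.exp (- -Real.log (p b + η)) = p b + η := fun b => by
      rw [neg_neg, Real.exp_log (by have := hp b; positivity)]
    simp only [this, Finset.sum_add_distrib, hp1]
    simpa using hηD

lemma exists_block_entropy_lt [MeasurableSpace X] {T : X → X} {μ : Measure X} {k : ℕ}
    {π : X → Fin k} (hπ : Measurable π) {t : ℝ} (ht : 0 ≤ t)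
    (h : ksEntropy T μ < ENNReal.ofReal t) [IsProbabilityMeasure μ] :
    ∃ m : ℕ, 0 < m ∧ ∑ b : Fin m → Fin k,
      Real.negMulLog (μ.real {y | (fun j : Fin m => π (T^[(j : ℕ)] y)) = b}) < m * t := by
  set P : X → ℕ := fun y => (π y : ℕ) with hP
  have hPm : Measurable P := measurable_from_top.comp hπ
  have hPf : (range P).Finite := (finite_lt_nat k).subset (by rintro _ ⟨y, rfl⟩; exact (π y).2)
  have h1 := lt_of_le_of_lt (le_iSup _ P) h
  rw [iSup_pos hPm, iSup_pos hPf] at h1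
  obtain ⟨m, hm, hlt⟩ := (frequently_atTop.1 (frequently_lt_of_liminf_lt (by isBoundedDefault) h1)) 1
  refine ⟨m, hm, ?_⟩
  rw [ENNReal.div_lt_iff (Or.inl (by simp; omega)) (Or.inl (by simp))] at hlt
  have hinj : Function.Injective
      (fun b : Fin m → Fin k => List.ofFn fun j => ((b j : Fin k) : ℕ)) := by
    intro b b' hb
    ext j
    exact congrFun (List.ofFn_injective hb) j
  have h2 := (ENNReal.tsum_comp_le_tsum_of_injective hinj fun l : List ℕ => ENNReal.ofReal
    (Real.negMulLog ((μ ((fun x => (List.range m).map fun j => P (T^[j] x)) ⁻¹' {l})).toReal)))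
  have hset : ∀ b : Fin m → Fin k, (fun x => (List.range m).map fun j => P (T^[j] x)) ⁻¹'
      {List.ofFn fun j => ((b j : Fin k) : ℕ)} =
      {y | (fun j : Fin m => π (T^[(j : ℕ)] y)) = b} := by
    intro b
    ext y
    simp only [mem_preimage, mem_singleton_iff, mem_ofPred_eq]
    rw [show (List.range m).map (fun j => P (T^[j] y)) = List.ofFn fun j : Fin m => P (T^[(j : ℕ)] y)
      from List.ext_getElem (by simp) (by simp), List.ofFn_inj]
    simp [funext_iff, Fin.ext_iff, hP]
  simp only [hset] at h2
  rw [tsum_fintype, ← ENNReal.ofReal_sum_of_nonneg (fun b _ => Real.negMulLog_nonneg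
    ENNReal.toReal_nonneg measureReal_le_one)] at h2
  have h3 := h2.trans_lt (show partInfo T μ P m < _ from hlt)
  rw [← ENNReal.ofReal_natCast, ← ENNReal.ofReal_mul ht] at h3
  rw [mul_comm]
  exact (ENNReal.ofReal_lt_ofReal_iff_of_nonneg (Finset.sum_nonneg fun b _ =>
    Real.negMulLog_nonneg ENNReal.toReal_nonneg measureReal_le_one)).1 h3

/-- The empirical measure of the first `N + 1` points of the orbit of `x`. -/
noncomputable def empirical [MeasurableSpace X] (T : X → X) (x : X) (N : ℕ) :
    ProbabilityMeasure X :=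
  ⟨((N + 1 : ℕ) : ℝ≥0∞)⁻¹ • ∑ j ∈ Finset.range (N + 1), Measure.dirac (T^[j] x), ⟨by
    simp only [Measure.smul_apply, Measure.coe_finsetSum, Finset.sum_apply, measure_univ,
      Finset.sum_const, Finset.card_range, nsmul_eq_mul, mul_one, smul_eq_mul]
    exact ENNReal.inv_mul_cancel (by simp) (by simp)⟩⟩

lemma integral_empirical [MeasurableSpace X] [MeasurableSingletonClass X] (T : X → X) (x : X)
    (N : ℕ) (f : X → ℝ) : ∫ y, f y ∂(empirical T x N : Measure X) =
      (∑ j ∈ Finset.range (N + 1), f (T^[j] x)) / ((N + 1 : ℕ) : ℝ) := by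
  change ∫ y, f y ∂(((N + 1 : ℕ) : ℝ≥0∞)⁻¹ • ∑ j ∈ Finset.range (N + 1),
    Measure.dirac (T^[j] x)) = _
  rw [integral_smul_measure, integral_finsetSum_measure
    (fun _ _ => integrable_dirac (by simp))]
  simp only [integral_dirac, ENNReal.toReal_inv, ENNReal.toReal_natCast, smul_eq_mul]
  rw [div_eq_inv_mul]

lemma exists_tendsto_empirical [MetricSpace X] [CompactSpace X] [MeasurableSpace X] [BorelSpace X]
    {T : X → X} (hT : Continuous T) (x : X) :
    ∃ μ : ProbabilityMeasure X, Tendsto (empirical T x) (hyperfilter ℕ) (𝓝 μ) ∧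
      MeasurePreserving T (μ : Measure X) μ := by
  obtain ⟨μ, -, hμ⟩ := isCompact_univ.ultrafilter_le_nhds
    ((hyperfilter ℕ).map (empirical T x)) (by simp)
  have hμ : Tendsto (empirical T x) (hyperfilter ℕ) (𝓝 μ) := hμ
  refine ⟨μ, hμ, hT.measurable, ?_⟩
  have : IsProbabilityMeasure ((μ : Measure X).map T) :=
    Measure.isProbabilityMeasure_map hT.measurable.aemeasurable
  refine ext_of_forall_integral_eq_of_IsFiniteMeasure fun f => ?_
  rw [integral_map hT.measurable.aemeasurable f.continuous.aestronglyMeasurable]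
  rw [ProbabilityMeasure.tendsto_iff_forall_integral_tendsto] at hμ
  have h1 := (hμ (f.compContinuous ⟨T, hT⟩)).sub (hμ f)
  refine sub_eq_zero.1 (tendsto_nhds_unique h1 ?_)
  refine Tendsto.mono_left ?_ Nat.hyperfilter_le_atTop
  simp only [integral_empirical, BoundedContinuousFunction.compContinuous_apply,
    ContinuousMap.coe_mk, ← sub_div, ← Finset.sum_sub_distrib, ← Function.iterate_succ_apply' T]
  simp only [Finset.sum_range_sub (fun j => f (T^[j] x))]
  refine squeeze_zero_norm (a := fun N : ℕ => 2 * ‖f‖ * (1 / ((N : ℝ) + 1))) (fun N => ?_) ?_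
  · rw [norm_div, div_eq_mul_one_div, Real.norm_natCast]
    push_cast
    gcongr
    rw [two_mul]
    exact (norm_sub_le _ _).trans (add_le_add (f.norm_coe_le_norm _) (f.norm_coe_le_norm _))
  · simpa using (tendsto_one_div_add_atTop_nhds_zero_nat (𝕜 := ℝ)).const_mul (2 * ‖f‖)

lemma exists_partition_null_frontier [PseudoMetricSpace X] [MeasurableSpace X] [BorelSpace X]
    (μ : Measure X) [SFinite μ] {k : ℕ} (c : Fin k → X) {a ε : ℝ} (hε : a < ε)
    (hc : ∀ y, ∃ i, dist y (c i) < a) :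
    ∃ π : X → Fin k, Measurable π ∧ (∀ y, dist y (c (π y)) < ε) ∧
      ∀ i, μ (frontier (π ⁻¹' {i})) = 0 := by
  choose ρ hρ hfr using fun i => exists_null_frontier_thickening μ {c i} hε
  simp only [Metric.thickening_singleton] at hfr
  have hex : ∀ y, ∃ i, y ∈ Metric.ball (c i) (ρ i) ∧ ∀ j < i, y ∉ Metric.ball (c j) (ρ j) := by
    intro y
    obtain ⟨i, hi⟩ := hc y
    have hne : {i | y ∈ Metric.ball (c i) (ρ i)}.Nonempty :=
      ⟨i, Metric.mem_ball.2 (hi.trans (hρ i).1)⟩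
    exact ⟨wellFounded_lt.min _ hne, wellFounded_lt.min_mem _ hne,
      fun j hj hy => wellFounded_lt.not_lt_min {i | y ∈ Metric.ball (c i) (ρ i)} hy hj⟩
  choose π hπ hπ' using hex
  have hset : ∀ i, π ⁻¹' {i} =
      Metric.ball (c i) (ρ i) ∩ ⋂ j ∈ Finset.Iio i, (Metric.ball (c j) (ρ j))ᶜ := by
    intro i
    ext y
    simp only [mem_preimage, mem_singleton_iff, mem_inter_iff, mem_iInter, Finset.mem_Iio,
      mem_compl_iff]
    constructor
    · rintro rfl
      exact ⟨hπ y, hπ' y⟩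
    · rintro ⟨h1, h2⟩
      rcases lt_trichotomy (π y) i with h | h | h
      · exact absurd (hπ y) (h2 _ h)
      · exact h
      · exact absurd h1 (hπ' y _ h)
  refine ⟨π, measurable_to_countable' fun i => ?_, fun y => (hπ y).trans (hρ _).2, fun i => ?_⟩
  · rw [hset]
    exact measurableSet_ball.inter
      (Finset.measurableSet_biInter _ fun j _ => measurableSet_ball.compl)
  · rw [hset]
    refine null_frontier_inter (hfr i) (null_frontier_biInter _ fun j _ => ?_)
    rw [frontier_compl]
    exact hfr j

lemma exists_mem_lowWeightSet [MetricSpace X] [MeasurableSpace X] [BorelSpace X]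
    {T : X → X} (hT : Continuous T) {x : X} {μ : ProbabilityMeasure X}
    (hμ : Tendsto (empirical T x) (hyperfilter ℕ) (𝓝 μ))
    (hinv : MeasurePreserving T (μ : Measure X) μ) {k : ℕ} (c : Fin k → X) {ε t s : ℝ}
    (hε : 0 < ε) (hc : ∀ y, ∃ i, dist y (c i) < ε / 4) (ht : 0 ≤ t)
    (hks : ksEntropy T (μ : Measure X) < ENNReal.ofReal t) (hts : t < s) :
    ∃ m r j : ℕ, (0 < m ∧ ∑ b, Real.exp (-TopologicalSpace.denseSeq ((Fin m → Fin k) → ℝ) j b) <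
      Real.exp ((s - t) * m)) ∧
      x ∈ lowWeightSet T c ε t m r (TopologicalSpace.denseSeq ((Fin m → Fin k) → ℝ) j) := by
  obtain ⟨π, hπm, hπc, hπf⟩ := exists_partition_null_frontier (μ : Measure X) c
    (show ε / 4 < ε / 2 by linarith) hc
  obtain ⟨m, hm, hent⟩ := exists_block_entropy_lt hπm ht hks
  set β : X → Fin m → Fin k := fun y j => π (T^[(j : ℕ)] y) with hβ
  have hβm : Measurable β := measurable_pi_lambda _ fun j =>
    hπm.comp (hT.measurable.iterate j)
  have hfr : ∀ b, (μ : Measure X) (frontier (β ⁻¹' {b})) = 0 := by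
    intro b
    have : β ⁻¹' {b} = ⋂ j ∈ (Finset.univ : Finset (Fin m)), T^[(j : ℕ)] ⁻¹' (π ⁻¹' {b j}) := by
      ext y; simp [hβ, funext_iff]
    rw [this]
    refine null_frontier_biInter _ fun j _ => ?_
    refine measure_mono_null ((hT.iterate j).frontier_preimage_subset _) ?_
    rw [(hinv.iterate j).measure_preimage isClosed_frontier.measurableSet.nullMeasurableSet]
    exact hπf _
  have hintegral : ∀ (ν : ProbabilityMeasure X) (g : (Fin m → Fin k) → ℝ),
      ∫ y, g (β y) ∂(ν : Measure X) = ∑ b, (ν : Measure X).real (β ⁻¹' {b}) * g b := by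
    intro ν g
    have : IsProbabilityMeasure ((ν : Measure X).map β) :=
      Measure.isProbabilityMeasure_map hβm.aemeasurable
    rw [← integral_map hβm.aemeasurable (measurable_of_finite g).aestronglyMeasurable,
      integral_fintype (Integrable.of_finite)]
    simp only [smul_eq_mul, map_measureReal_apply hβm (measurableSet_singleton _)]
  have hp1 : ∑ b, (μ : Measure X).real (β ⁻¹' {b}) = 1 := by
    simpa using (hintegral μ fun _ => 1).symm
  have hm' : (0 : ℝ) < m := by exact_mod_cast hm
  obtain ⟨j, hj1, hj2⟩ := exists_denseSeq_weight (fun b => measureReal_nonneg) hp1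
    (show _ < (m : ℝ) * t from hent) (mul_pos (sub_pos.2 hts) hm')
  set g := TopologicalSpace.denseSeq ((Fin m → Fin k) → ℝ) j with hg
  refine ⟨m, ?_⟩
  suffices h : ∃ r : Fin m, x ∈ lowWeightSet T c ε t m r g by
    obtain ⟨r, hr⟩ := h
    exact ⟨r, j, ⟨hm, hj2⟩, hr⟩
  set G : ℕ → ℝ := fun i => g (β (T^[i] x)) with hG
  have hlim : Tendsto (fun N : ℕ => (∑ i ∈ Finset.range (N + 1), G i) / ((N + 1 : ℕ) : ℝ))
      (hyperfilter ℕ) (𝓝 (∑ b, (μ : Measure X).real (β ⁻¹' {b}) * g b)) := by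
    simp only [hG, ← integral_empirical T x _ fun y => g (β y), hintegral]
    refine tendsto_finsetSum _ fun b _ => Tendsto.mul_const _ ?_
    exact (ENNReal.tendsto_toReal (measure_ne_top _ _)).comp
      (ProbabilityMeasure.tendsto_measure_of_null_frontier_of_tendsto' hμ (hfr b))
  obtain ⟨a, ha1, ha2⟩ := exists_between hj1
  obtain ⟨K, hK0, hK⟩ : ∃ K : ℝ, 0 ≤ K ∧ ∀ b, |g b| ≤ K :=
    ⟨∑ b, |g b|, by positivity, fun b =>
      Finset.single_le_sum (f := fun b => |g b|) (fun _ _ => abs_nonneg _) (Finset.mem_univ b)⟩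
  have hL : Tendsto (fun N : ℕ => (N + 1) / m) atTop atTop :=
    (Nat.tendsto_div_const_atTop hm.ne').comp (tendsto_add_atTop_nat 1)
  have hev : ∀ᶠ N in (hyperfilter ℕ : Filter ℕ), ∃ r : Fin m,
      ∑ l ∈ Finset.range ((N + 1) / m), G (r + m * l) ≤ (((N + 1) / m : ℕ) : ℝ) * (m * t) := by
    have hbig : ∀ᶠ N in (hyperfilter ℕ : Filter ℕ), (|a| + K) * m ≤
        (((N + 1) / m : ℕ) : ℝ) * (m * (m * t - a)) :=
      Nat.hyperfilter_le_atTop <| ((tendsto_natCast_atTop_atTop.comp hL).atTop_mul_const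
        (by have := sub_pos.2 ha2; positivity)).eventually_ge_atTop _
    filter_upwards [hlim.eventually_lt_const ha1, hbig] with N hN hN'
    rw [div_lt_iff₀ (by positivity)] at hN
    by_contra! hcon
    set L := (N + 1) / m with hLdef
    have hdecomp : N + 1 = m * L + (N + 1) % m := (Nat.div_add_mod _ _).symm
    have hmod : (N + 1) % m < m := Nat.mod_lt _ hm
    generalize (N + 1) % m = q at hdecomp hmod
    have h1 : (m : ℝ) * (L * (m * t)) ≤ ∑ i ∈ Finset.range (m * L), G i := by
      rw [Finset.sum_range_mul_eq_sum_phases, ← Fin.sum_univ_eq_sum_range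
        (fun r => ∑ l ∈ Finset.range L, G (r + m * l)) m]
      have := Finset.card_nsmul_le_sum Finset.univ
        (fun r : Fin m => ∑ l ∈ Finset.range L, G (r + m * l)) _ fun r _ => (hcon r).le
      simpa using this
    rw [hdecomp, Finset.sum_range_add] at hN
    have h2 : -(q * K) ≤ ∑ i ∈ Finset.range q, G (m * L + i) := by
      have := Finset.card_nsmul_le_sum (Finset.range q) (fun i => G (m * L + i)) (-K)
        fun i _ => (abs_le.1 (hK _)).1
      simpa using this
    have hq : (q : ℝ) < m := by exact_mod_cast hmod
    have h3 : (q : ℝ) * K ≤ m * K := by gcongr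
    have h4 : a * q ≤ |a| * m := by
      have : (0 : ℝ) ≤ q := by positivity
      have := le_abs_self a
      have := abs_nonneg a
      nlinarith
    push_cast at hN
    nlinarith
  obtain ⟨r, hr⟩ := Ultrafilter.eventually_exists_iff.1 hev
  refine ⟨r, hL.frequently ((hr.frequently.filter_mono Nat.hyperfilter_le_atTop).mono ?_)⟩
  intro N hN
  refine ⟨fun l => β (T^[r + m * l] x), fun l i => ?_, ?_⟩
  · rw [add_comm, Function.iterate_add_apply]
    exact hπc _
  · rw [Fin.sum_univ_eq_sum_range (fun l => g (β (T^[r + m * l] x)))]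
    exact hN

/-- Bowen's theorem: a set all of whose points have an invariant limit measure of small entropy
has small topological entropy. -/
lemma bowenEntropy_le_of_ksEntropy_le [MetricSpace X] [CompactSpace X] [MeasurableSpace X]
    [BorelSpace X] {T : X → X} (hT : Continuous T) {Z : Set X} {t : ℝ≥0∞}
    (hZ : ∀ x ∈ Z, ∃ μ : ProbabilityMeasure X, Tendsto (empirical T x) (hyperfilter ℕ) (𝓝 μ) ∧
      MeasurePreserving T (μ : Measure X) μ ∧ ksEntropy T (μ : Measure X) ≤ t) :
    bowenEntropy T Z ≤ t := by
  refine iSup₂_le fun ε hε => le_of_forall_gt fun u hu => ?_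
  obtain ⟨s, hts, hsu⟩ := ENNReal.lt_iff_exists_nnreal_btwn.1 hu
  obtain ⟨t', htt', ht's⟩ := ENNReal.lt_iff_exists_nnreal_btwn.1 hts
  refine lt_of_le_of_lt (sInf_le ⟨s, ?_, rfl⟩) hsu
  refine le_antisymm (iSup_le fun n => ?_) zero_le
  obtain ⟨F, -, hF, hcov⟩ := finite_cover_balls_of_compact (isCompact_univ (X := X))
    (show 0 < ε / 4 by positivity)
  obtain ⟨k, c, hc⟩ := hF.fin_param
  have hc : ∀ y, ∃ i, dist y (c i) < ε / 4 := by
    intro y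
    obtain ⟨z, hz, hyz⟩ := mem_iUnion₂.1 (hcov (mem_univ y))
    rw [← hc.2] at hz
    obtain ⟨i, rfl⟩ := hz
    exact ⟨i, hyz⟩
  let I := {q : ℕ × ℕ × ℕ // 0 < q.1 ∧
    ∑ b, Real.exp (-TopologicalSpace.denseSeq ((Fin q.1 → Fin k) → ℝ) q.2.2 b) <
      Real.exp (((s : ℝ) - t') * q.1)}
  refine (bowenH_mono T (Z := ⋃ q : I, lowWeightSet T c ε t' q.1.1 q.1.2.1
    (TopologicalSpace.denseSeq _ q.1.2.2)) (fun x hx => ?_) _ _ _).trans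
    (bowenH_iUnion_eq_zero T _ _ _ _ fun q => ?_).le
  · obtain ⟨μ, hμ, hinv, hks⟩ := hZ x hx
    obtain ⟨m, r, j, h, hx⟩ := exists_mem_lowWeightSet hT hμ hinv c hε hc t'.coe_nonneg
      (by rw [ENNReal.ofReal_coe_nnreal]; exact hks.trans_lt htt')
      (show (t' : ℝ) < s by exact_mod_cast ht's)
    exact mem_iUnion.2 ⟨⟨(m, r, j), h⟩, hx⟩
  · exact bowenH_lowWeightSet T c (fun y => (hc y).imp fun i hi => hi.trans (by linarith))
      q.2.1 _ _ s.2 q.2.2 n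

/-- **Theorem 1.2 (b).** Variational principle for saturated systems: if
`M_Φ(α;E) ≠ ∅`, then `h_top(X_Φ(α;E)) = sup { h_μ : μ ∈ M_Φ(α;E) }`. -/
theorem variational_principle {X : Type*} [MetricSpace X] [CompactSpace X]
    [MeasurableSpace X] [BorelSpace X] (T : X → X) (hT : Continuous T) (hsat : Saturated T)
    {B : Type*} [NormedAddCommGroup B] [NormedSpace ℝ B] [CompleteSpace B]
    (Φ : X → WeakDual ℝ B) (hΦ : Continuous Φ) (E : Set B) (α : WeakDual ℝ B)
    (hM : {μ : Measure X | IsProbabilityMeasure μ ∧ MeasurePreserving T μ μ ∧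
        ∀ w ∈ E, (∫ x, Φ x w ∂μ) ≤ α w}.Nonempty) :
    bowenEntropy T {x : X | ∀ w ∈ E,
        Filter.limsup (fun n : ℕ =>
          (((n : ℝ)⁻¹ • ∑ j ∈ Finset.range n, Φ (T^[j] x)) : WeakDual ℝ B) w)
          Filter.atTop ≤ α w} =
      ⨆ μ ∈ {μ : Measure X | IsProbabilityMeasure μ ∧ MeasurePreserving T μ μ ∧
        ∀ w ∈ E, (∫ x, Φ x w ∂μ) ≤ α w}, ksEntropy T μ := by
  have happly : ∀ (x : X) (w : B) (n : ℕ),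
      (((n : ℝ)⁻¹ • ∑ j ∈ Finset.range n, Φ (T^[j] x)) : WeakDual ℝ B) w =
        (∑ j ∈ Finset.range n, Φ (T^[j] x) w) / n := by
    intro x w n
    rw [div_eq_inv_mul]
    exact congrArg _ (map_sum ((topDualPairing ℝ B).flip w) (fun j => Φ (T^[j] x)) _)
  have hcont : ∀ w : B, Continuous fun x => Φ x w := fun w => (WeakDual.eval_continuous w).comp hΦ
  simp only [happly]
  refine le_antisymm (bowenEntropy_le_of_ksEntropy_le hT fun x hx => ?_) (iSup₂_le fun μ hμ => ?_)
  · obtain ⟨μ, hμ, hinv⟩ := exists_tendsto_empirical hT x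
    refine ⟨μ, hμ, hinv, le_iSup₂_of_le (μ : Measure X) ⟨μ.2, hinv, fun w hw => ?_⟩ le_rfl⟩
    refine le_trans ?_ (hx w hw)
    set f : BoundedContinuousFunction X ℝ :=
      BoundedContinuousFunction.mkOfCompact ⟨fun x => Φ x w, hcont w⟩ with hf
    have hlim := ProbabilityMeasure.tendsto_iff_forall_integral_tendsto.1 hμ f
    replace hlim := hlim.congr fun N => integral_empirical T x N f
    have hbound : ∀ n : ℕ, |(∑ j ∈ Finset.range n, Φ (T^[j] x) w) / (n : ℝ)| ≤ ‖f‖ := by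
      intro n
      rw [abs_div, Nat.abs_cast]
      refine div_le_of_le_mul₀ (by positivity) (by positivity) ?_
      refine (Finset.abs_sum_le_sum_abs _ _).trans ?_
      refine (Finset.sum_le_card_nsmul _ _ ‖f‖ fun j _ => f.norm_coe_le_norm (T^[j] x)).trans ?_
      simp [mul_comm]
    refine le_of_forall_lt fun a ha => ?_
    obtain ⟨a', haa', ha'⟩ := exists_between ha
    refine haa'.trans_le (le_limsup_of_frequently_le ?_
      (isBoundedUnder_of ⟨‖f‖, fun n => (abs_le.1 (hbound n)).2⟩))
    refine (tendsto_add_atTop_nat 1).frequently (Frequently.filter_mono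
      (Eventually.frequently ?_) Nat.hyperfilter_le_atTop)
    exact (hlim.eventually_const_lt ha').mono fun N hN => hN.le
  · obtain ⟨hprob, hinv, hE⟩ := hμ
    rw [← hsat μ hprob hinv]
    refine bowenEntropy_mono T fun x hx w hw => ?_
    exact (hx ⟨fun x => Φ x w, hcont w⟩).limsup_eq.le.trans (hE w hw)
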